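/- There exists an absolute constant C > 0 with the following property. Let f : ℝ → ℝ be continuous, set c_{m,k} = ∫_0^1 f(|2x − 1| − m) e^{−2πi k x} dx for m, k ∈ ℤ, and suppose A := sup_{k∈ℤ} (1 + |k|)² ( Σ_{m∈ℤ} |c_{m,k}|² )^{1/2} < ∞. Then f is square-integrable on ℝ and ∫_ℝ f(t)² dt ≤ C·A². -/

import Mathlib

open scoped BigOperators ENNReal

open MeasureTheory

lemma aux_tent (g : ℝ → ℝ) (hg : Continuous g) :
    ∫ x in (0:ℝ)..1, g |2*x-1| = ∫ x in (0:ℝ)..1, g x := by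
  have hc : Continuous fun x : ℝ => g |2*x-1| := by fun_prop
  rw [← intervalIntegral.integral_add_adjacent_intervals (b := 1/2)
    (hc.intervalIntegrable _ _) (hc.intervalIntegrable _ _)]
  have h1 : ∫ x in (0:ℝ)..(1/2), g |2*x-1| = ∫ x in (0:ℝ)..(1/2), g (1 - 2*x) := by
    apply intervalIntegral.integral_congr
    intro x hx
    rw [Set.uIcc_of_le (by norm_num)] at hx
    have : |2*x-1| = 1 - 2*x := by rw [abs_of_nonpos (by linarith [hx.2])]; ring
    simp only [this]
  have h2 : ∫ x in (1/2:ℝ)..1, g |2*x-1| = ∫ x in (1/2:ℝ)..1, g (2*x - 1) := by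
    apply intervalIntegral.integral_congr
    intro x hx
    rw [Set.uIcc_of_le (by norm_num)] at hx
    have : |2*x-1| = 2*x - 1 := by rw [abs_of_nonneg (by linarith [hx.1])]
    simp only [this]
  rw [h1, h2, intervalIntegral.integral_comp_sub_mul _ (by norm_num),
    intervalIntegral.integral_comp_mul_sub _ (by norm_num)]
  norm_num
  ring

lemma aux_parseval (g : ℝ → ℝ) (hg : Continuous g) :
    HasSum (fun k : ℤ => ‖∫ x in (0:ℝ)..1, (g x : ℂ) *
      Complex.exp (-2 * (Real.pi : ℂ) * Complex.I * (k : ℂ) * (x : ℂ))‖^2)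
      (∫ x in (0:ℝ)..1, g x ^ 2) := by
  have hc : Continuous fun x : ℝ => (g x : ℂ) := by fun_prop
  have hL : MemLp (fun x : ℝ => (g x : ℂ)) 2 (volume.restrict (Set.Ioc (0:ℝ) 1)) := by
    rw [memLp_two_iff_integrable_sq_norm hc.aestronglyMeasurable]
    exact (by fun_prop : Continuous fun x : ℝ => ‖(g x : ℂ)‖ ^ 2).integrableOn_Ioc
  have h := hasSum_sq_fourierCoeffOn (zero_lt_one' ℝ) hL
  convert h using 1
  · funext k
    rw [fourierCoeffOn_eq_integral]
    congr 2
    simp only [sub_zero, div_one, one_smul]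
    apply intervalIntegral.integral_congr
    intro x _
    simp only [fourier_coe_apply, smul_eq_mul]
    rw [mul_comm]
    congr 2
    push_cast
    ring
  · simp

lemma aux_lint (f : ℝ → ℝ) (hf : Continuous f) (m : ℤ) :
    ∫⁻ t in Set.Ioc (-(m:ℝ)) (-(m:ℝ) + 1), ENNReal.ofReal (f t ^ 2) =
    ∑' k : ℤ, ENNReal.ofReal
              (‖∫ x in (0:ℝ)..1, (f (|2*x - 1| - (m:ℝ)) : ℂ) *
                  Complex.exp (-2 * (Real.pi : ℂ) * Complex.I * (k : ℂ) * (x : ℂ))‖^2) := by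
  have h := aux_parseval (fun x => f (|2*x-1| - m)) (by fun_prop)
  rw [← ENNReal.ofReal_tsum_of_nonneg (fun _ => by positivity) h.summable, h.tsum_eq,
    aux_tent (fun x => f (x - m) ^ 2) (by fun_prop),
    intervalIntegral.integral_comp_sub_right (fun x => f x ^ 2),
    intervalIntegral.integral_of_le (by linarith),
    ofReal_integral_eq_lintegral_ofReal]
  · congr 3 <;> ring
  · exact ((by fun_prop : Continuous fun x => f x ^ 2).integrableOn_Ioc)
  · exact Filter.Eventually.of_forall fun x => by positivity

lemma aux_lint_all (f : ℝ → ℝ) :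
    ∫⁻ t, ENNReal.ofReal (f t ^ 2) =
    ∑' m : ℤ, ∫⁻ t in Set.Ioc (-(m:ℝ)) (-(m:ℝ) + 1), ENNReal.ofReal (f t ^ 2) := by
  rw [← setLIntegral_univ, ← iUnion_Ioc_intCast ℝ, lintegral_iUnion (fun _ => measurableSet_Ioc)
    (Set.pairwise_disjoint_Ioc_intCast ℝ), ← (Equiv.neg ℤ).tsum_eq]
  simp

lemma aux_summable : Summable fun k : ℤ => 1 / (1 + |(k:ℝ)|)^4 := by
  have h : Summable fun n : ℕ => 1 / (1 + (n:ℝ))^4 := by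
    have := (summable_nat_add_iff 1).2 (Real.summable_one_div_nat_pow (p := 4) |>.2 (by norm_num))
    refine this.congr fun n => ?_
    push_cast
    rw [add_comm]
  apply Summable.of_nat_of_neg <;> simpa using h

/-- `E²(ℝ)` embeds into `L²(ℝ)`: there is an absolute constant `C > 0`
such that if `f : ℝ → ℝ` is continuous and
`A = sup_{k∈ℤ} (1+|k|)² (Σ_{m∈ℤ} |c_{m,k}|²)^{1/2} < ∞`, where
`c_{m,k} = ∫₀¹ f(|2x−1|−m)e^{−2πikx} dx`, then `f` is square-integrable on `ℝ` and
`∫_ℝ f² ≤ C·A²`. -/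
theorem E2_embeds_into_L2 :
    ∃ C : ℝ, 0 < C ∧ ∀ f : ℝ → ℝ, Continuous f → ∀ A : ℝ,
      (∀ k : ℤ,
        ENNReal.ofReal ((1 + |(k:ℝ)|)^2) *
            (∑' m : ℤ, ENNReal.ofReal
              (‖∫ x in (0:ℝ)..1, (f (|2*x - 1| - (m:ℝ)) : ℂ) *
                  Complex.exp (-2 * (Real.pi : ℂ) * Complex.I * (k : ℂ) * (x : ℂ))‖^2))
                ^ (1/2 : ℝ)
          ≤ ENNReal.ofReal A) →
      MeasureTheory.Integrable (fun t => f t ^ 2) ∧ (∫ t : ℝ, f t ^ 2) ≤ C * A^2 := by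
  refine ⟨∑' k : ℤ, 1 / (1 + |(k:ℝ)|)^4,
    aux_summable.tsum_pos (fun _ => by positivity) 0 (by norm_num), ?_⟩
  intro f hf A hA
  have key : ∫⁻ t, ENNReal.ofReal (f t ^ 2) ≤
      ENNReal.ofReal ((∑' k : ℤ, 1 / (1 + |(k:ℝ)|)^4) * A^2) := by
    rw [aux_lint_all]
    simp_rw [aux_lint f hf]
    rw [ENNReal.tsum_comm, ← tsum_mul_right, ENNReal.ofReal_tsum_of_nonneg
      (fun _ => by positivity) (aux_summable.mul_right _)]
    refine ENNReal.tsum_le_tsum fun k => ?_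
    have h := hA k
    generalize (∑' m : ℤ, ENNReal.ofReal
              (‖∫ x in (0:ℝ)..1, (f (|2*x - 1| - (m:ℝ)) : ℂ) *
                  Complex.exp (-2 * (Real.pi : ℂ) * Complex.I * (k : ℂ) * (x : ℂ))‖^2)) = X at h ⊢
    have hw : (0:ℝ) < (1 + |(k:ℝ)|)^4 := by positivity
    have h2 := pow_le_pow_left' h 2
    rw [mul_pow, ← ENNReal.rpow_natCast (X ^ (1/2:ℝ)), ← ENNReal.rpow_mul,
      ← ENNReal.ofReal_pow (by positivity), ← pow_mul] at h2
    norm_num at h2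
    have h3 : ENNReal.ofReal A ^ 2 ≤ ENNReal.ofReal (A^2) := by
      rcases le_total 0 A with h0 | h0
      · rw [ENNReal.ofReal_pow h0]
      · simp [ENNReal.ofReal_of_nonpos h0]
    rw [one_div_mul_eq_div, ENNReal.ofReal_div_of_pos hw,
      ENNReal.le_div_iff_mul_le (Or.inl (by simpa using hw)) (Or.inl ENNReal.ofReal_ne_top), mul_comm]
    exact h2.trans h3
  have hc : Continuous fun t => f t ^ 2 := by fun_prop
  have hn : 0 ≤ᵐ[volume] fun t => f t ^ 2 := Filter.Eventually.of_forall fun x => by positivity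
  refine ⟨⟨hc.aestronglyMeasurable, ?_⟩, ?_⟩
  · rw [hasFiniteIntegral_iff_ofReal hn]
    exact key.trans_lt ENNReal.ofReal_lt_top
  · rw [integral_eq_lintegral_of_nonneg_ae hn hc.aestronglyMeasurable]
    refine ENNReal.toReal_le_of_le_ofReal ?_ key
    exact mul_nonneg (tsum_nonneg fun _ => by positivity) (sq_nonneg _)
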